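/- Let B ⊂ A be a regular inclusion of simple unital C*-algebras with a finite-index conditional expectation, E₀ : A → B the minimal conditional expectation, C := C*(B ∪ C_A(B)), and F : A → C a conditional expectation with (E₀|_C) ∘ F = E₀. Let G := W(B ⊂ A) be the generalized Weyl group (a finite group) and let u : G → N_A(B) be any set-theoretic section of the quotient map N_A(B) → W(B ⊂ A) with u_e = 1. Then (u_g)_{g ∈ G} is a two-sided orthonormal quasi-basis for F: F(u_g* u_h) = δ_{g,h}·1 for all g, h ∈ G, and x = Σ_{g ∈ G} u_g F(u_g* x) = Σ_{g ∈ G} F(x u_g*) u_g for every x ∈ A. In particular, Σ_{g ∈ G} u_g u_g* = |G|·1, i.e., Ind(F) = |G|. -/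

import Mathlib

namespace RegularInclusion

variable {A : Type*} [NormedRing A] [StarRing A] [CStarRing A] [CompleteSpace A]
  [NormedAlgebra ℂ A] [StarModule ℂ A]

/-- A conditional expectation of `A` onto the subset `B`: a `ℂ`-linear positive
`B`-bimodular projection of `A` onto `B`. -/
def IsCondExp (B : Set A) (E : A →ₗ[ℂ] A) : Prop :=
  (∀ x, E x ∈ B) ∧ (∀ b ∈ B, E b = b) ∧
  (∀ x, ∃ y, E (star x * x) = star y * y) ∧
  (∀ b₁ ∈ B, ∀ b₂ ∈ B, ∀ x, E (b₁ * x * b₂) = b₁ * E x * b₂)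

/-- `l` is a right quasi-basis for `E`, witnessing finite index. -/
def IsRightQB (E : A →ₗ[ℂ] A) {n : ℕ} (l : Fin n → A) : Prop :=
  ∀ x, x = ∑ i, E (x * l i) * star (l i)

/-- The centralizer (relative commutant) `C_A(B)` of `B` in `A`. -/
def cent (B : Set A) : Set A := {x | ∀ b ∈ B, x * b = b * x}

/-- The normalizer `N_A(B) = {u ∈ U(A) : uBu* = B}` of `B` in `A`. -/
def normalizer (B : Set A) : Set A :=
  {u | u ∈ unitary A ∧ (fun x => u * x * star u) '' B = B}

/-- The set `U(B)` of unitaries of `B`. -/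
def UB (B : Set A) : Set A := {b | b ∈ B ∧ b ∈ unitary A}

/-- The set `U(B)·U(C_A(B))` of products of a unitary of `B` and a unitary of
the centralizer of `B`. -/
def UBC (B : Set A) : Set A :=
  {x | ∃ b c, b ∈ B ∧ b ∈ unitary A ∧ c ∈ cent B ∧ c ∈ unitary A ∧ x = b * c}

/-- Simplicity of the C*-algebra (given as the subset `S` of `A`): the only closed
two-sided ideals of `S` are `{0}` and `S`. -/
def IsSimpleCStar (S : Set A) : Prop :=
  ∀ I : Set A, I ⊆ S → IsClosed I → (0 : A) ∈ I →
    (∀ x ∈ I, ∀ y ∈ I, x + y ∈ I) →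
    (∀ x ∈ I, ∀ b ∈ S, x * b ∈ I ∧ b * x ∈ I) →
    I = {0} ∨ I = S

/-- The intermediate C*-subalgebra `C := C*(B ∪ C_A(B))` generated by `B` and the
centralizer of `B`. -/
def genC (B : Set A) : StarSubalgebra ℂ A :=
  (StarAlgebra.adjoin ℂ (B ∪ cent B)).topologicalClosure

/-- Regularity of the inclusion `B ⊆ A`: the normalizer of `B` generates `A` as a
C*-algebra. -/
def IsRegular (B : Set A) : Prop :=
  (StarAlgebra.adjoin ℂ (normalizer B)).topologicalClosure = ⊤

/-- `E₀` is the minimal conditional expectation of `A` onto `B`: the finite-index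
conditional expectation whose (scalar) Watatani index is least among all finite-index
conditional expectations onto `B`. -/
def IsMinimalCondExp (B : Set A) (E₀ : A →ₗ[ℂ] A) : Prop :=
  IsCondExp B E₀ ∧
  ∃ (r₀ : ℝ) (n : ℕ) (l : Fin n → A), IsRightQB E₀ l ∧
    (∑ i, l i * star (l i)) = (r₀ : ℂ) • 1 ∧
    ∀ E : A →ₗ[ℂ] A, IsCondExp B E → ∀ (m : ℕ) (μ : Fin m → A), IsRightQB E μ →
      ∀ r : ℝ, (∑ i, μ i * star (μ i)) = (r : ℂ) • 1 → r₀ ≤ r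

/-!
The key point is that `F v = 0` for every normalizer `v` of `B` outside `U(B)·U(C_A(B))`. For
`d ∈ C_A(B)`, the element `b = E₀ (v * d)` of `B` satisfies `b x = (v x v*) b` for all `x ∈ B`, so
`b* b` and `b b*` are central in `B`, hence scalars. If `b ≠ 0`, then `b` is a multiple of a unitary
`w ∈ B`, and `w* v` centralizes `B`, so that `v = w (w* v)` lies in `U(B)·U(C_A(B))`. Hence
`E₀ (v * d) = 0` for every `d`, and by density `E₀ (v * y) = 0` for every `y ∈ C`. Then
`E₀ (F v * x) = E₀ (v * F x) = 0` for every `x ∈ A`, and `F v = 0` because `E₀` is nondegenerate.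

This is the orthonormality of `(u_g)`. The first reconstruction formula holds on each coset
`u_g U(B) U(C_A(B))`, hence on all normalizers, hence on `A` by regularity. The second is
the adjoint of the first one for the family `(u_g*)`, whose members again represent the cosets.
-/

/-! ### Positive maps and density -/

section CStarAlgebra

variable {𝓐 𝓑 : Type*} [CStarAlgebra 𝓐] [PartialOrder 𝓐] [StarOrderedRing 𝓐]
  [CStarAlgebra 𝓑] [PartialOrder 𝓑] [StarOrderedRing 𝓑]

/-- The positive linear map underlying a linear map of C*-algebras which preserves the elements of
the form `x* x`; it gives access to the automatic continuity of positive maps. -/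
noncomputable def positiveLinearMapOfStarMulSelf (f : 𝓐 →ₗ[ℂ] 𝓑)
    (hf : ∀ x, ∃ y, f (star x * x) = star y * y) : 𝓐 →ₚ[ℂ] 𝓑 :=
  .mk₀ f fun a ha => by
    obtain ⟨x, rfl⟩ := CStarAlgebra.nonneg_iff_eq_star_mul_self.mp ha
    obtain ⟨y, hy⟩ := hf x
    exact hy ▸ star_mul_self_nonneg y

end CStarAlgebra

lemma continuous_of_map_star_mul_self {f : A →ₗ[ℂ] A}
    (hf : ∀ x, ∃ y, f (star x * x) = star y * y) : Continuous f := by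
  let : CStarAlgebra A := {}
  let : PartialOrder A := CStarAlgebra.spectralOrder A
  have : StarOrderedRing A := CStarAlgebra.spectralOrderedRing A
  exact map_continuous (positiveLinearMapOfStarMulSelf f hf)

lemma map_star_of_map_star_mul_self {f : A →ₗ[ℂ] A}
    (hf : ∀ x, ∃ y, f (star x * x) = star y * y) (x : A) : f (star x) = star (f x) := by
  let : CStarAlgebra A := {}
  let : PartialOrder A := CStarAlgebra.spectralOrder A
  have : StarOrderedRing A := CStarAlgebra.spectralOrderedRing A
  exact map_star (positiveLinearMapOfStarMulSelf f hf) x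

section Density

variable {R 𝓐 M : Type*} [CommSemiring R] [StarRing R] [Semiring 𝓐] [StarRing 𝓐]
  [TopologicalSpace 𝓐] [IsTopologicalSemiring 𝓐] [ContinuousStar 𝓐] [Algebra R 𝓐] [StarModule R 𝓐]
  [AddCommMonoid M] [Module R M] [TopologicalSpace M] [T2Space M]

lemma eqOn_topologicalClosure_adjoin {S : Set 𝓐} (hstar : ∀ x ∈ S, star x ∈ S) {f g : 𝓐 →ₗ[R] M}
    (hf : Continuous f) (hg : Continuous g) (h : Set.EqOn f g (Submonoid.closure S)) :
    Set.EqOn f g (StarAlgebra.adjoin R S).topologicalClosure := by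
  have hunion : S ∪ star S = S :=
    Set.union_eq_left.mpr fun x hx => star_star x ▸ hstar _ hx
  have hspan : (StarAlgebra.adjoin R S : Set 𝓐) =
      (Submodule.span R (Submonoid.closure S : Set 𝓐) : Set 𝓐) := by
    have := StarAlgebra.adjoin_eq_span (R := R) S
    rw [hunion] at this
    exact congrArg SetLike.coe this
  rw [StarSubalgebra.topologicalClosure_coe, hspan]
  exact (LinearMap.eqOn_span_iff.mpr h).closure hf hg

end Density

/-! ### Scalars in C*-algebras -/

open scoped ComplexOrder in
lemma eq_norm_sq_of_star_mul_self_eq_smul_one {b : A} {s : ℂ} (hb : b ≠ 0)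
    (hs : star b * b = s • 1) : s = (‖b‖ : ℂ) ^ 2 := by
  have : Nontrivial A := ⟨b, 0, hb⟩
  let : CStarAlgebra A := {}
  let : PartialOrder A := CStarAlgebra.spectralOrder A
  have : StarOrderedRing A := CStarAlgebra.spectralOrderedRing A
  have hs_nonneg : 0 ≤ s := by
    refine spectrum_nonneg_of_nonneg (star_mul_self_nonneg b) ?_
    rw [hs, ← Algebra.algebraMap_eq_smul_one, spectrum.scalar_eq]
    exact Set.mem_singleton s
  have hnorm : ‖s‖ = ‖b‖ ^ 2 := by
    rw [sq, ← CStarRing.norm_star_mul_self, hs, norm_smul, CStarRing.norm_one, mul_one]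
  rw [Complex.eq_coe_norm_of_nonneg hs_nonneg, hnorm, Complex.ofReal_pow]

lemma inv_norm_smul_mem_unitary {b : A} (hb : b ≠ 0) {s t : ℂ} (hs : star b * b = s • 1)
    (ht : b * star b = t • 1) : (‖b‖ : ℂ)⁻¹ • b ∈ unitary A := by
  have hnorm : (‖b‖ : ℂ) ≠ 0 := by simpa using hb
  have hstar : star (‖b‖ : ℂ)⁻¹ = (‖b‖ : ℂ)⁻¹ := by simp
  have hscalar : (‖b‖ : ℂ)⁻¹ * (‖b‖ : ℂ)⁻¹ * (‖b‖ : ℂ) ^ 2 = 1 := by field_simp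
  obtain rfl := eq_norm_sq_of_star_mul_self_eq_smul_one hb hs
  obtain rfl : t = (‖b‖ : ℂ) ^ 2 := by
    simpa using eq_norm_sq_of_star_mul_self_eq_smul_one (star_ne_zero.mpr hb)
      ((star_star b).symm ▸ ht)
  rw [Unitary.mem_iff, star_smul, hstar, smul_mul_smul_comm, smul_mul_smul_comm, hs, ht, smul_smul,
    hscalar, one_smul]
  exact ⟨rfl, rfl⟩

/-! ### The centre of a simple C*-algebra -/

section Center

omit [CStarRing A]

variable {B : StarSubalgebra ℂ A}

omit [CompleteSpace A] in
lemma closure_image_mul_left_eq_of_isSimpleCStar (hBclosed : IsClosed (B : Set A))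
    (hBsimple : IsSimpleCStar (B : Set A)) {w : A} (hw : w ∈ B) (hw_cent : w ∈ cent (B : Set A))
    (hw_ne : w ≠ 0) : closure ((w * ·) '' (B : Set A)) = B := by
  have himage : (w * ·) '' (B : Set A) ⊆ B := by
    rintro _ ⟨b, hb, rfl⟩
    exact mul_mem hw hb
  refine (hBsimple _ (closure_minimal himage hBclosed) isClosed_closure
    (subset_closure ⟨0, zero_mem B, mul_zero w⟩) (fun x hx y hy => ?_)
    (fun x hx b hb => ⟨?_, ?_⟩)).resolve_left fun hzero => hw_ne ?_
  · refine map_mem_closure₂ continuous_add hx hy ?_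
    rintro _ ⟨a, ha, rfl⟩ _ ⟨b, hb, rfl⟩
    exact ⟨a + b, add_mem ha hb, mul_add w a b⟩
  · refine map_mem_closure (f := (· * b)) (continuous_mul_const b) hx ?_
    rintro _ ⟨a, ha, rfl⟩
    exact ⟨a * b, mul_mem ha hb, (mul_assoc w a b).symm⟩
  · refine map_mem_closure (continuous_const_mul b) hx ?_
    rintro _ ⟨a, ha, rfl⟩
    refine ⟨b * a, mul_mem hb ha, ?_⟩
    simp only [← mul_assoc, hw_cent b hb]
  · have : w ∈ closure ((w * ·) '' (B : Set A)) := subset_closure ⟨1, one_mem B, mul_one w⟩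
    rwa [hzero] at this

lemma isUnit_of_mem_cent_of_isSimpleCStar (hBclosed : IsClosed (B : Set A))
    (hBsimple : IsSimpleCStar (B : Set A)) {w : A} (hw : w ∈ B) (hw_cent : w ∈ cent (B : Set A))
    (hw_ne : w ≠ 0) : IsUnit w := by
  have hone : (1 : A) ∈ closure ((w * ·) '' (B : Set A)) := by
    rw [closure_image_mul_left_eq_of_isSimpleCStar hBclosed hBsimple hw hw_cent hw_ne]
    exact one_mem B
  -- The units are a neighbourhood of `1`, so the dense ideal `w B` contains one.
  obtain ⟨_, hunit, b, hb, rfl⟩ :=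
    mem_closure_iff_nhds.mp hone {y | IsUnit y} (Units.isOpen.mem_nhds isUnit_one)
  exact ((Commute.isUnit_mul_iff (hw_cent b hb)).mp hunit).1

lemma isCentral_of_isSimpleCStar (hBclosed : IsClosed (B : Set A))
    (hBsimple : IsSimpleCStar (B : Set A)) : Algebra.IsCentral ℂ B where
  out z hz := by
    rcases subsingleton_or_nontrivial A with _ | _
    · exact Subsingleton.elim 0 z ▸ zero_mem _
    obtain ⟨t, ht⟩ := spectrum.nonempty (z : A)
    have hcent : algebraMap ℂ A t - z ∈ cent (B : Set A) := fun b hb => by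
      have hzb : b * z = z * b := congrArg Subtype.val (Subalgebra.mem_center_iff.mp hz ⟨b, hb⟩)
      rw [sub_mul, mul_sub, Algebra.commutes, hzb]
    have hzero : algebraMap ℂ A t - z = 0 := by
      by_contra hne
      exact ht (isUnit_of_mem_cent_of_isSimpleCStar hBclosed hBsimple
        (sub_mem (algebraMap_mem B t) z.2) hcent hne)
    exact Algebra.mem_bot.mpr ⟨t, Subtype.ext (sub_eq_zero.mp hzero)⟩

omit [CompleteSpace A] in
lemma exists_eq_smul_one_of_mem_cent [Algebra.IsCentral ℂ B] {z : A} (hz : z ∈ B)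
    (hcent : z ∈ cent (B : Set A)) : ∃ t : ℂ, z = t • 1 := by
  have hcenter : (⟨z, hz⟩ : B) ∈ Subalgebra.center ℂ B :=
    Subalgebra.mem_center_iff.mpr fun b => Subtype.ext (hcent b b.2).symm
  obtain ⟨t, ht⟩ := Algebra.mem_bot.mp (Algebra.IsCentral.out hcenter)
  exact ⟨t, (congrArg Subtype.val ht).symm.trans (Algebra.algebraMap_eq_smul_one t)⟩

end Center

/-! ### The normalizer and the subgroup `U(B)·U(C_A(B))` -/

section Unitary

variable {R : Type*} [Monoid R] [StarMul R] {v : R}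

lemma star_mul_cancel_left (hv : v ∈ unitary R) (x : R) : star v * (v * x) = x := by
  rw [← mul_assoc, Unitary.star_mul_self_of_mem hv, one_mul]

lemma mul_star_cancel_left (hv : v ∈ unitary R) (x : R) : v * (star v * x) = x := by
  rw [← mul_assoc, Unitary.mul_star_self_of_mem hv, one_mul]

end Unitary

section Normalizer

omit [CStarRing A] [CompleteSpace A] [NormedAlgebra ℂ A] [StarModule ℂ A]

variable {B : Set A} {v x : A}

/-- The normalizer of `B`, bundled as a submonoid of `A`. -/
def normalizerSubmonoid (B : Set A) : Submonoid A where
  carrier := normalizer B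
  one_mem' := ⟨one_mem _, by simp⟩
  mul_mem' {v w} hv hw := by
    refine ⟨mul_mem hv.1 hw.1, ?_⟩
    calc (fun x => v * w * x * star (v * w)) '' B
        = (fun x => v * x * star v) '' ((fun x => w * x * star w) '' B) := by
          simp only [Set.image_image, star_mul, mul_assoc]
      _ = B := by rw [hw.2, hv.2]

lemma mul_mem_normalizer {w : A} (hv : v ∈ normalizer B) (hw : w ∈ normalizer B) :
    v * w ∈ normalizer B :=
  (normalizerSubmonoid B).mul_mem hv hw

lemma star_mem_normalizer (hv : v ∈ normalizer B) : star v ∈ normalizer B := by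
  refine ⟨Unitary.star_mem hv.1, ?_⟩
  calc (fun x => star v * x * star (star v)) '' B
      = (fun x => star v * x * star (star v)) '' ((fun x => v * x * star v) '' B) := by rw [hv.2]
    _ = B := by
      simp [Set.image_image, mul_assoc, Unitary.star_mul_self_of_mem hv.1,
        star_mul_cancel_left hv.1]

lemma conj_mem (hv : v ∈ normalizer B) (hx : x ∈ B) : v * x * star v ∈ B :=
  hv.2.subset (Set.mem_image_of_mem _ hx)

lemma conj_mem_cent (hv : v ∈ normalizer B) (hx : x ∈ cent B) : v * x * star v ∈ cent B := by
  intro b hb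
  have hcomm : x * (star v * b * v) = star v * b * v * x := by
    simpa using hx _ (conj_mem (star_mem_normalizer hv) hb)
  calc v * x * star v * b = v * (x * (star v * b * v)) * star v := by
        simp only [mul_assoc, Unitary.mul_star_self_of_mem hv.1, mul_one]
    _ = b * (v * x * star v) := by
        rw [hcomm]; simp only [mul_assoc, mul_star_cancel_left hv.1]

lemma conj_mem_UBC (hv : v ∈ normalizer B) (hx : x ∈ UBC B) : v * x * star v ∈ UBC B := by
  obtain ⟨b, c, hb, hbu, hc, hcu, rfl⟩ := hx
  have hconj {y : A} (hy : y ∈ unitary A) : v * y * star v ∈ unitary A :=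
    mul_mem (mul_mem hv.1 hy) (Unitary.star_mem hv.1)
  refine ⟨v * b * star v, v * c * star v, conj_mem hv hb, hconj hbu, conj_mem_cent hv hc,
    hconj hcu, ?_⟩
  simp only [mul_assoc, star_mul_cancel_left hv.1]

end Normalizer

omit [CompleteSpace A] in
lemma subset_genC {B : Set A} : B ∪ cent B ⊆ genC B :=
  (StarAlgebra.subset_adjoin ℂ _).trans (StarSubalgebra.le_topologicalClosure _)

omit [CompleteSpace A] in
lemma UBC_subset_genC {B : Set A} : UBC B ⊆ genC B := by
  rintro _ ⟨b, c, hb, -, hc, -, rfl⟩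
  exact mul_mem (subset_genC (.inl hb)) (subset_genC (.inr hc))

section StarSubalgebra

variable {B : StarSubalgebra ℂ A} {v x : A}

omit [CStarRing A] [CompleteSpace A] in
lemma star_mem_cent (hx : x ∈ cent (B : Set A)) : star x ∈ cent (B : Set A) := fun b hb => by
  simpa using congrArg star (hx (star b) (star_mem hb)).symm

omit [CStarRing A] [CompleteSpace A] in
lemma star_mem_UBC (hx : x ∈ UBC (B : Set A)) : star x ∈ UBC (B : Set A) := by
  obtain ⟨b, c, hb, hbu, hc, hcu, rfl⟩ := hx
  refine ⟨star b, star c, star_mem hb, Unitary.star_mem hbu, star_mem_cent hc,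
    Unitary.star_mem hcu, ?_⟩
  rw [star_mul, star_mem_cent hc _ (star_mem hb)]

lemma mem_UBC_of_intertwiner [Algebra.IsCentral ℂ B] (hv : v ∈ normalizer (B : Set A))
    {b : A} (hb : b ∈ B) (hb_ne : b ≠ 0) (hint : ∀ x ∈ B, b * x = v * x * star v * b) :
    v ∈ UBC (B : Set A) := by
  have hint_star : ∀ x ∈ B, x * star b = star b * (v * x * star v) := fun x hx => by
    simpa [mul_assoc] using congrArg star (hint (star x) (star_mem hx))
  have hcent_star_mul : star b * b ∈ cent (B : Set A) := fun x hx => by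
    rw [mul_assoc, hint x hx, ← mul_assoc, ← hint_star x hx, mul_assoc]
  have hcent_mul_star : b * star b ∈ cent (B : Set A) := fun y hy => by
    obtain ⟨x, hx, rfl⟩ := hv.2.superset hy
    rw [mul_assoc, ← hint_star x hx, ← mul_assoc, hint x hx, mul_assoc]
  obtain ⟨s, hs⟩ := exists_eq_smul_one_of_mem_cent (mul_mem (star_mem hb) hb) hcent_star_mul
  obtain ⟨t, ht⟩ := exists_eq_smul_one_of_mem_cent (mul_mem hb (star_mem hb)) hcent_mul_star
  have hw := inv_norm_smul_mem_unitary hb_ne hs ht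
  set w : A := (‖b‖ : ℂ)⁻¹ • b with hw_def
  have hw_int : ∀ x ∈ B, x * star w = star w * (v * x * star v) := fun x hx => by
    rw [hw_def, star_smul, mul_smul_comm, hint_star x hx, smul_mul_assoc]
  refine ⟨w, star w * v, B.smul_mem hb _, hw, fun x hx => ?_, mul_mem (Unitary.star_mem hw) hv.1,
    (mul_star_cancel_left hw v).symm⟩
  rw [← mul_assoc, hw_int x hx]
  simp only [mul_assoc, Unitary.star_mul_self_of_mem hv.1, mul_one]

end StarSubalgebra

/-! ### Conditional expectations -/

/-- `E` is nondegenerate: its kernel contains no nonzero right ideal. For a positive `E` this is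
faithfulness (take `y = x*`), in a form that a quasi-basis provides directly. -/
def IsNondegenerate (E : A →ₗ[ℂ] A) : Prop :=
  ∀ x, (∀ y, E (x * y) = 0) → x = 0

omit [CStarRing A] [CompleteSpace A] [StarModule ℂ A] in
lemma IsRightQB.isNondegenerate {E : A →ₗ[ℂ] A} {n : ℕ} {l : Fin n → A} (hl : IsRightQB E l) :
    IsNondegenerate E := fun x hx => by
  rw [hl x]
  exact Finset.sum_eq_zero fun i _ => by rw [hx, zero_mul]

namespace IsCondExp

lemma continuous {B : Set A} {E : A →ₗ[ℂ] A} (hE : IsCondExp B E) : Continuous E :=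
  continuous_of_map_star_mul_self hE.2.2.1

lemma map_star {B : Set A} {E : A →ₗ[ℂ] A} (hE : IsCondExp B E) (x : A) :
    E (star x) = star (E x) :=
  map_star_of_map_star_mul_self hE.2.2.1 x

variable {B : StarSubalgebra ℂ A} {E : A →ₗ[ℂ] A} {b : A}

omit [CStarRing A] [CompleteSpace A] in
lemma map_one (hE : IsCondExp (B : Set A) E) : E 1 = 1 :=
  hE.2.1 1 (one_mem B)

omit [CStarRing A] [CompleteSpace A] in
lemma map_mul_left (hE : IsCondExp (B : Set A) E) (hb : b ∈ B) (x : A) : E (b * x) = b * E x := by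
  simpa using hE.2.2.2 b hb 1 (one_mem B) x

omit [CStarRing A] [CompleteSpace A] in
lemma map_mul_right (hE : IsCondExp (B : Set A) E) (hb : b ∈ B) (x : A) : E (x * b) = E x * b := by
  simpa using hE.2.2.2 1 (one_mem B) b hb x

lemma map_mul_eq_zero_of_mem_genC (hE : IsCondExp (B : Set A) E) {a : A}
    (ha : ∀ d ∈ cent (B : Set A), E (a * d) = 0) {y : A} (hy : y ∈ genC (B : Set A)) :
    E (a * y) = 0 := by
  have hstar : ∀ x ∈ (B : Set A) ∪ cent B, star x ∈ (B : Set A) ∪ cent B := by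
    rintro x (hx | hx)
    · exact .inl (star_mem hx)
    · exact .inr (star_mem_cent hx)
  -- Inserting `d ∈ C_A(B)` on the right makes the claim stable under right multiplication.
  have hmonoid : ∀ x ∈ Submonoid.closure ((B : Set A) ∪ cent B), ∀ d ∈ cent (B : Set A),
      E (a * x * d) = 0 := by
    intro x hx
    induction hx using Submonoid.closure_induction_right with
    | one => simpa using ha
    | mul_right x _ y hy ih =>
      intro d hd
      rcases hy with hy | hy
      · rw [mul_assoc, mul_assoc x, ← hd y hy, ← mul_assoc, ← mul_assoc, hE.map_mul_right hy,
          mul_assoc a, ← mul_assoc a, ih d hd, zero_mul]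
      · rw [← mul_assoc a, mul_assoc (a * x)]
        exact ih (y * d) fun b hb => by rw [mul_assoc, hd b hb, ← mul_assoc, hy b hb, mul_assoc]
  refine eqOn_topologicalClosure_adjoin hstar (f := E ∘ₗ LinearMap.mulLeft ℂ a) (g := 0)
    (hE.continuous.comp (continuous_const_mul a)) continuous_zero (fun x hx => ?_) hy
  simpa using hmonoid x hx 1 fun b _ => by rw [one_mul, mul_one]

lemma map_mul_eq_zero_of_notMem_UBC [Algebra.IsCentral ℂ B] (hE : IsCondExp (B : Set A) E)
    {v : A} (hv : v ∈ normalizer (B : Set A)) (hv_notMem : v ∉ UBC (B : Set A)) {d : A}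
    (hd : d ∈ cent (B : Set A)) : E (v * d) = 0 := by
  by_contra hne
  refine hv_notMem (mem_UBC_of_intertwiner hv (hE.1 (v * d)) hne fun x hx => ?_)
  rw [← hE.map_mul_right hx, ← hE.map_mul_left (conj_mem hv hx)]
  simp only [mul_assoc, star_mul_cancel_left hv.1, hd x hx]

lemma eq_zero_of_notMem_UBC [Algebra.IsCentral ℂ B] (hE : IsCondExp (B : Set A) E)
    (hE_nondeg : IsNondegenerate E) {F : A →ₗ[ℂ] A}
    (hF : IsCondExp (genC (B : Set A) : Set A) F) (hEF : ∀ x, E (F x) = E x) {v : A}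
    (hv : v ∈ normalizer (B : Set A)) (hv_notMem : v ∉ UBC (B : Set A)) : F v = 0 :=
  hE_nondeg _ fun x => calc
    E (F v * x) = E (F v * F x) := by rw [← hEF, hF.map_mul_left (hF.1 v)]
    _ = E (v * F x) := by rw [← hF.map_mul_right (hF.1 x), hEF]
    _ = 0 := hE.map_mul_eq_zero_of_mem_genC
      (fun _ => hE.map_mul_eq_zero_of_notMem_UBC hv hv_notMem) (hF.1 x)

end IsCondExp

/-! ### Coset representatives -/

/-- The family `u` is a complete set of representatives in `N_A(B)` of the generalized Weyl group
`N_A(B) / U(B)·U(C_A(B))`, without repetition. -/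
structure IsWeylTransversal (B : Set A) {ι : Type*} (u : ι → A) : Prop where
  mem_normalizer : ∀ i, u i ∈ normalizer B
  notMem_UBC : ∀ i j, i ≠ j → star (u i) * u j ∉ UBC B
  exists_mem_UBC : ∀ v ∈ normalizer B, ∃ i, star (u i) * v ∈ UBC B

section Transversal

variable {B : StarSubalgebra ℂ A} {ι : Type*} {u : ι → A}

omit [CStarRing A] [CompleteSpace A] in
lemma IsWeylTransversal.star (hu : IsWeylTransversal (B : Set A) u) :
    IsWeylTransversal (B : Set A) (star u) where
  mem_normalizer i := star_mem_normalizer (hu.mem_normalizer i)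
  notMem_UBC i j hij hmem := by
    have := conj_mem_UBC (star_mem_normalizer (hu.mem_normalizer j)) hmem
    refine hu.notMem_UBC j i hij.symm ?_
    simpa [mul_assoc, Unitary.star_mul_self_of_mem (hu.mem_normalizer j).1] using this
  exists_mem_UBC v hv := by
    obtain ⟨i, hi⟩ := hu.exists_mem_UBC _ (star_mem_normalizer hv)
    have := conj_mem_UBC (hu.mem_normalizer i) (star_mem_UBC hi)
    refine ⟨i, ?_⟩
    simpa [mul_assoc, Unitary.mul_star_self_of_mem (hu.mem_normalizer i).1] using this

lemma IsWeylTransversal.map_star_mul [DecidableEq ι] [Algebra.IsCentral ℂ B]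
    (hu : IsWeylTransversal (B : Set A) u) {E F : A →ₗ[ℂ] A} (hE : IsCondExp (B : Set A) E)
    (hE_nondeg : IsNondegenerate E) (hF : IsCondExp (genC (B : Set A) : Set A) F)
    (hEF : ∀ x, E (F x) = E x) (i j : ι) :
    F (Star.star (u i) * u j) = if i = j then 1 else 0 := by
  split_ifs with hij
  · rw [hij, Unitary.star_mul_self_of_mem (hu.mem_normalizer j).1, hF.map_one]
  · exact hE.eq_zero_of_notMem_UBC hE_nondeg hF hEF
      (mul_mem_normalizer (star_mem_normalizer (hu.mem_normalizer i)) (hu.mem_normalizer j))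
      (hu.notMem_UBC i j hij)

variable [Fintype ι] [DecidableEq ι] {C : StarSubalgebra ℂ A} {F : A →ₗ[ℂ] A}

omit [CStarRing A] [CompleteSpace A] in
lemma IsCondExp.sum_mul_map_star_mul_of_eq_mul (hF : IsCondExp (C : Set A) F)
    (horth : ∀ i j, F (star (u i) * u j) = if i = j then 1 else 0) (i : ι) {c : A} (hc : c ∈ C) :
    ∑ j, u j * F (star (u j) * (u i * c)) = u i * c := by
  have hcoeff (j : ι) : F (star (u j) * (u i * c)) = if j = i then c else 0 := by
    rw [← mul_assoc, hF.map_mul_right hc, horth, ite_mul, one_mul, zero_mul]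
  simp [hcoeff]

lemma IsCondExp.sum_mul_map_star_mul (hF : IsCondExp (genC (B : Set A) : Set A) F)
    (hreg : IsRegular (B : Set A)) (hu : IsWeylTransversal (B : Set A) u)
    (horth : ∀ i j, F (star (u i) * u j) = if i = j then 1 else 0) (x : A) :
    ∑ i, u i * F (star (u i) * x) = x := by
  let f : A →ₗ[ℂ] A :=
    ∑ i, LinearMap.mulLeft ℂ (u i) ∘ₗ F ∘ₗ LinearMap.mulLeft ℂ (star (u i))
  have hf_apply (y : A) : f y = ∑ i, u i * F (star (u i) * y) := by simp [f]
  have hf : Continuous f := by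
    have := hF.continuous
    simp only [funext hf_apply]
    fun_prop
  have hnormalizer : Set.EqOn f (LinearMap.id : A →ₗ[ℂ] A)
      (Submonoid.closure (normalizer (B : Set A))) := by
    intro v hv
    obtain ⟨i, hi⟩ := hu.exists_mem_UBC v
      (Submonoid.closure_le (S := normalizerSubmonoid (B : Set A)).mpr le_rfl hv)
    rw [hf_apply, LinearMap.id_apply, ← mul_star_cancel_left (hu.mem_normalizer i).1 v]
    exact hF.sum_mul_map_star_mul_of_eq_mul horth i (UBC_subset_genC hi)
  have hx : x ∈ (StarAlgebra.adjoin ℂ (normalizer (B : Set A))).topologicalClosure :=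
    (congrArg (x ∈ ·) hreg).mpr StarSubalgebra.mem_top
  rw [← hf_apply]
  exact eqOn_topologicalClosure_adjoin (R := ℂ) (fun _ => star_mem_normalizer) hf continuous_id
    hnormalizer hx

lemma IsCondExp.sum_map_mul_star_mul (hF : IsCondExp (genC (B : Set A) : Set A) F)
    (hreg : IsRegular (B : Set A)) (hu : IsWeylTransversal (B : Set A) u)
    (horth : ∀ i j, F (u i * star (u j)) = if i = j then 1 else 0) (x : A) :
    ∑ i, F (x * star (u i)) * u i = x := by
  have hadjoint := hF.sum_mul_map_star_mul hreg hu.star (by simpa using horth) (star x)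
  have := congrArg star hadjoint
  simpa [← hF.map_star] using this

end Transversal

theorem coset_representatives_are_two_sided_ON_quasi_basis_for_F_general
    {B : StarSubalgebra ℂ A} [Algebra.IsCentral ℂ B] (hreg : IsRegular (B : Set A))
    {E F : A →ₗ[ℂ] A} (hE : IsCondExp (B : Set A) E) (hE_nondeg : IsNondegenerate E)
    (hF : IsCondExp (genC (B : Set A) : Set A) F) (hEF : ∀ x, E (F x) = E x)
    {ι : Type*} [Fintype ι] [DecidableEq ι] {u : ι → A} (hu : IsWeylTransversal (B : Set A) u) :
    (∀ i j, F (star (u i) * u j) = if i = j then (1 : A) else 0) ∧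
    (∀ x, x = ∑ i, u i * F (star (u i) * x)) ∧
    (∀ x, x = ∑ i, F (x * star (u i)) * u i) ∧
    ∑ i, u i * star (u i) = (Fintype.card ι : ℂ) • (1 : A) := by
  have horth := hu.map_star_mul hE hE_nondeg hF hEF
  have horth_star : ∀ i j, F (u i * star (u j)) = if i = j then 1 else 0 := by
    simpa using hu.star.map_star_mul hE hE_nondeg hF hEF
  refine ⟨horth, fun x => (hF.sum_mul_map_star_mul hreg hu horth x).symm,
    fun x => (hF.sum_map_mul_star_mul hreg hu horth_star x).symm, ?_⟩
  simp [Unitary.mul_star_self_of_mem (hu.mem_normalizer _).1, Nat.cast_smul_eq_nsmul]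

/-- for a regular inclusion `B ⊂ A` of simple unital C*-algebras with
minimal conditional expectation `E₀`, compatible conditional expectation
`F : A → C := C*(B ∪ C_A(B))`, and any complete set `(u_g)` of coset representatives of
the (finite) generalized Weyl group in `N_A(B)` containing `1`, the family `(u_g)` is a
two-sided orthonormal quasi-basis for `F`; in particular `Σ_g u_g u_g* = |G|·1`, i.e.
`Ind(F) = |G|`. -/
theorem coset_representatives_are_two_sided_ON_quasi_basis_for_F
    (B : StarSubalgebra ℂ A) (hBclosed : IsClosed (B : Set A))
    (hAsimple : IsSimpleCStar (Set.univ : Set A))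
    (hBsimple : IsSimpleCStar (B : Set A))
    (hreg : IsRegular (B : Set A))
    (E₀ : A →ₗ[ℂ] A) (hE₀ : IsMinimalCondExp (B : Set A) E₀)
    (F : A →ₗ[ℂ] A) (hF : IsCondExp (genC (B : Set A) : Set A) F)
    (hFcompat : ∀ x : A, E₀ (F x) = E₀ x)
    (n : ℕ) (u : Fin n → A)
    (hu_mem : ∀ i, u i ∈ normalizer (B : Set A))
    (hu_distinct : ∀ i j, i ≠ j → star (u i) * u j ∉ UBC (B : Set A))
    (hu_cover : ∀ v ∈ normalizer (B : Set A), ∃ i, star (u i) * v ∈ UBC (B : Set A))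
    (hu_one : ∃ i₀, u i₀ = 1) :
    (∀ i j, F (star (u i) * u j) = if i = j then (1 : A) else 0) ∧
    (∀ x : A, x = ∑ i, u i * F (star (u i) * x)) ∧
    (∀ x : A, x = ∑ i, F (x * star (u i)) * u i) ∧
    (∑ i, u i * star (u i)) = ((n : ℕ) : ℂ) • (1 : A) := by
  obtain ⟨hE, _, _, l, hl, _⟩ := hE₀
  have := isCentral_of_isSimpleCStar hBclosed hBsimple
  simpa only [Fintype.card_fin] using
    coset_representatives_are_two_sided_ON_quasi_basis_for_F_general hreg hE hl.isNondegenerate hF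
      hFcompat ⟨hu_mem, hu_distinct, hu_cover⟩

end RegularInclusion
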